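/- arXiv:2001.00474 — 8 statements merged into one kernel-verified Lean document; each statement's English description precedes it below -/
import Mathlib

section
/- Let Ψ be an automorphism of ℙ^n over F_q with Ψ = [M] ∈ PGL_{n+1}(F_q). Then Ψ is transitive on ℙ^n if and only if the characteristic polynomial χ_M ∈ F_q[x] of M is projectively primitive. -/
/-- The projective automorphism of `ℙ^n(K)` induced by an invertible matrix `M`. -/
noncomputable def projMap {K : Type*} [Field K] {n : ℕ} (M : GL (Fin (n + 1)) K) :
    Projectivization K (Fin (n + 1) → K) → Projectivization K (Fin (n + 1) → K) :=
  Projectivization.map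
    ((Matrix.GeneralLinearGroup.toLin M).toLinearEquiv :
      (Fin (n + 1) → K) →ₗ[K] (Fin (n + 1) → K))
    (Matrix.GeneralLinearGroup.toLin M).toLinearEquiv.injective

/-- The projective automorphism induced by `M` is transitive on `ℙ^n(K)`. -/
def ProjTransitive {K : Type*} [Field K] {n : ℕ} (M : GL (Fin (n + 1)) K) : Prop :=
  ∀ P Q : Projectivization K (Fin (n + 1) → K), ∃ k : ℕ, (projMap M)^[k] P = Q

/-- A polynomial `χ` over a field `K` is *projectively primitive* if it is irreducible and,
for any root `α` of `χ` in `K[x]/(χ)`, the class `[α]` of `α` in the quotient group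
`(K[x]/(χ))^* / K^*` generates that group; concretely, `α` is nonzero and every nonzero
element `β` of `K[x]/(χ)` can be written as `c • α ^ k` with `c ∈ K`. -/
def ProjectivelyPrimitive {K : Type*} [Field K] (χ : Polynomial K) : Prop :=
  Irreducible χ ∧
    ∀ α : AdjoinRoot χ, Polynomial.aeval α χ = 0 →
      α ≠ 0 ∧ ∀ β : AdjoinRoot χ, β ≠ 0 →
        ∃ (k : ℕ) (c : K), β = algebraMap K (AdjoinRoot χ) c * α ^ k

open Polynomial in
/-- Evaluation at an endomorphism killed by `χ`, then at a vector. -/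
noncomputable def psiMap {K V : Type*} [Field K] [AddCommGroup V] [Module K V]
    (f : Module.End K V) (χ : Polynomial K) (h : aeval f χ = 0) (v : V) :
    AdjoinRoot χ →ₗ[K] V :=
  (LinearMap.applyₗ v).comp (Ideal.Quotient.liftₐ (Ideal.span {χ}) (aeval f) (by
    intro a ha
    obtain ⟨b, rfl⟩ := Ideal.mem_span_singleton.1 ha
    simp [h])).toLinearMap

open Polynomial in
theorem psiMap_mk {K V : Type*} [Field K] [AddCommGroup V] [Module K V]
    (f : Module.End K V) (χ : Polynomial K) (h : aeval f χ = 0) (v : V) (p : Polynomial K) :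
    psiMap f χ h v (AdjoinRoot.mk χ p) = aeval f p v := rfl

theorem psiMap_pow {K V : Type*} [Field K] [AddCommGroup V] [Module K V]
    (f : Module.End K V) (χ : Polynomial K) (h : Polynomial.aeval f χ = 0) (v : V) (k : ℕ) (c : K) :
    psiMap f χ h v (algebraMap K (AdjoinRoot χ) c * AdjoinRoot.root χ ^ k) = c • (f ^ k) v := by
  have : algebraMap K (AdjoinRoot χ) c * AdjoinRoot.root χ ^ k
      = AdjoinRoot.mk χ (Polynomial.C c * Polynomial.X ^ k) := by
    simp [AdjoinRoot.algebraMap_eq]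
  rw [this, psiMap_mk]
  simp

theorem proj_iter {K : Type*} [Field K] {n : ℕ} (M : GL (Fin (n + 1)) K)
    (v : Fin (n + 1) → K) (hv : v ≠ 0) (k : ℕ) :
    ∃ h : ((Matrix.toLin' (M : Matrix (Fin (n + 1)) (Fin (n + 1)) K)) ^ k) v ≠ 0,
    (projMap M)^[k] (Projectivization.mk K v hv) = Projectivization.mk K _ h := by
  induction k with
  | zero => exact ⟨by simpa using hv, by simp⟩
  | succ k ih =>
    obtain ⟨h, e⟩ := ih
    have key : ((Matrix.toLin' (M : Matrix (Fin (n + 1)) (Fin (n + 1)) K)) ^ (k + 1)) v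
        = (Matrix.GeneralLinearGroup.toLin M).toLinearEquiv
          (((Matrix.toLin' (M : Matrix (Fin (n + 1)) (Fin (n + 1)) K)) ^ k) v) := by
      rw [pow_succ']; rfl
    refine ⟨?_, ?_⟩
    · rw [key]
      exact (LinearEquiv.map_ne_zero_iff _).2 h
    · rw [Function.iterate_succ_apply', e]
      simp only [projMap, Projectivization.map_mk, key]
      rfl

/-- Transitivity in terms of vectors. -/
theorem trans_iff {K : Type*} [Field K] {n : ℕ} (M : GL (Fin (n + 1)) K) :
    ProjTransitive M ↔ ∀ v w : Fin (n + 1) → K, v ≠ 0 → w ≠ 0 → ∃ (k : ℕ) (c : K),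
      w = c • ((Matrix.toLin' (M : Matrix (Fin (n + 1)) (Fin (n + 1)) K)) ^ k) v := by
  constructor
  · intro H v w hv hw
    obtain ⟨k, hk⟩ := H (Projectivization.mk K v hv) (Projectivization.mk K w hw)
    obtain ⟨h, e⟩ := proj_iter M v hv k
    rw [e] at hk
    obtain ⟨c, hc⟩ := (Projectivization.mk_eq_mk_iff' K _ _ _ _).1 hk.symm
    exact ⟨k, c, hc.symm⟩
  · intro H P Q
    induction P using Projectivization.ind with | h v hv =>
    induction Q using Projectivization.ind with | h w hw =>
    obtain ⟨k, c, hc⟩ := H v w hv hw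
    obtain ⟨h, e⟩ := proj_iter M v hv k
    refine ⟨k, ?_⟩
    rw [e]
    exact ((Projectivization.mk_eq_mk_iff' K _ _ _ _).2 ⟨c, hc.symm⟩).symm

/-- An automorphism `Ψ = [M] ∈ PGL_{n+1}(F_q)` of `ℙ^n` is transitive if and only if the
characteristic polynomial of `M` is projectively primitive. -/
theorem statement2 {K : Type*} [Field K] [Fintype K] (n : ℕ) (hn : 0 < n)
    (M : GL (Fin (n + 1)) K) :
    ProjTransitive M ↔
      ProjectivelyPrimitive ((M : Matrix (Fin (n + 1)) (Fin (n + 1)) K).charpoly) := by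
  rw [trans_iff]
  have hmonic := (M : Matrix (Fin (n + 1)) (Fin (n + 1)) K).charpoly_monic
  have hdeg := (M : Matrix (Fin (n + 1)) (Fin (n + 1)) K).charpoly_natDegree_eq_dim
  have hfχ : Polynomial.aeval (Matrix.toLin' (M : Matrix (Fin (n + 1)) (Fin (n + 1)) K))
      (M : Matrix (Fin (n + 1)) (Fin (n + 1)) K).charpoly = 0 := by
    have h1 := LinearMap.aeval_self_charpoly
      (Matrix.toLin' (M : Matrix (Fin (n + 1)) (Fin (n + 1)) K))
    rwa [Matrix.charpoly_toLin'] at h1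
  have hpow : ∀ (v : Fin (n + 1) → K), v ≠ 0 → ∀ k : ℕ,
      ((Matrix.toLin' (M : Matrix (Fin (n + 1)) (Fin (n + 1)) K)) ^ k) v ≠ 0 :=
    fun v hv k => (proj_iter M v hv k).1
  generalize (M : Matrix (Fin (n + 1)) (Fin (n + 1)) K).charpoly = χ at *
  generalize Matrix.toLin' (M : Matrix (Fin (n + 1)) (Fin (n + 1)) K) = f at *
  have hfin : Module.Finite K (AdjoinRoot χ) := hmonic.finite_adjoinRoot
  have hrank : Module.finrank K (AdjoinRoot χ) = Module.finrank K (Fin (n + 1) → K) := by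
    rw [(AdjoinRoot.powerBasis' hmonic).finrank, AdjoinRoot.powerBasis'_dim, hdeg]; simp
  have hχ0 : χ ≠ 0 := hmonic.ne_zero
  constructor
  · intro H
    obtain ⟨v, hv⟩ := exists_ne (0 : Fin (n + 1) → K)
    have hsurj : Function.Surjective (psiMap f χ hfχ v) := by
      intro w
      by_cases hw : w = 0
      · exact ⟨0, by simp [hw]⟩
      · obtain ⟨k, c, hc⟩ := H v w hv hw
        exact ⟨_, (psiMap_pow f χ hfχ v k c).trans hc.symm⟩
    have hinj : Function.Injective (psiMap f χ hfχ v) :=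
      (LinearMap.injective_iff_surjective_of_finrank_eq_finrank hrank).2 hsurj
    have hgen : ∀ β : AdjoinRoot χ, β ≠ 0 → ∃ (k : ℕ) (c : K),
        β = algebraMap K (AdjoinRoot χ) c * AdjoinRoot.root χ ^ k := by
      intro β hβ
      obtain ⟨k, c, hc⟩ := H v (psiMap f χ hfχ v β) hv
        (fun h => hβ (hinj (h.trans (map_zero _).symm)))
      exact ⟨k, c, hinj (hc.trans (psiMap_pow f χ hfχ v k c).symm)⟩
    have : Nontrivial (AdjoinRoot χ) := hsurj.nontrivial
    have hnzd : NoZeroDivisors (AdjoinRoot χ) := by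
      refine ⟨fun {a b} hab => ?_⟩
      by_contra! hcon
      obtain ⟨k, c, hc⟩ := hgen a hcon.1
      obtain ⟨l, d, hd⟩ := hgen b hcon.2
      have hc0 : c ≠ 0 := by rintro rfl; exact hcon.1 (by simp [hc])
      have hd0 : d ≠ 0 := by rintro rfl; exact hcon.2 (by simp [hd])
      have e : a * b = algebraMap K (AdjoinRoot χ) (c * d) * AdjoinRoot.root χ ^ (k + l) := by
        rw [hc, hd, map_mul, pow_add]; ring
      have e2 := psiMap_pow f χ hfχ v (k + l) (c * d)
      rw [← e, hab, map_zero] at e2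
      exact (smul_ne_zero (mul_ne_zero hc0 hd0) (hpow v hv (k + l))) e2.symm
    have hdom : IsDomain (AdjoinRoot χ) := NoZeroDivisors.to_isDomain _
    have hirr : Irreducible χ := by
      have h1 : (Ideal.span {χ}).IsPrime := (Ideal.Quotient.isDomain_iff_prime _).1 hdom
      exact ((Ideal.span_singleton_prime hχ0).1 h1).irreducible
    refine ⟨hirr, fun α hα => ?_⟩
    have : Fact (Irreducible χ) := ⟨hirr⟩
    let σ : AdjoinRoot χ →ₐ[K] AdjoinRoot χ := AdjoinRoot.liftAlgHom χ (Algebra.ofId K _) α hα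
    have hσ : σ (AdjoinRoot.root χ) = α := AdjoinRoot.liftAlgHom_root ..
    have hσi : Function.Injective σ := σ.toRingHom.injective
    have hσs : Function.Surjective σ :=
      (LinearMap.injective_iff_surjective (f := σ.toLinearMap)).1 hσi
    constructor
    · rw [← hσ]
      intro h0
      have h1 : AdjoinRoot.root χ = 0 := hσi (h0.trans (map_zero σ).symm)
      have e2 := psiMap_pow f χ hfχ v 1 1
      rw [h1] at e2
      simp only [pow_one, mul_zero, map_zero, one_smul] at e2
      exact hpow v hv 1 (by simpa using e2.symm)
    · intro β hβ
      obtain ⟨β', rfl⟩ := hσs β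
      obtain ⟨k, c, hc⟩ := hgen β' (by rintro rfl; simp at hβ)
      exact ⟨k, c, by rw [hc, map_mul, map_pow, hσ, AlgHom.commutes]⟩
  · rintro ⟨hirr, H⟩ v w hv hw
    have hinj : Function.Injective (psiMap f χ hfχ v) := by
      rw [injective_iff_map_eq_zero]
      intro a ha
      obtain ⟨p, rfl⟩ := AdjoinRoot.mk_surjective a
      rw [psiMap_mk] at ha
      rw [AdjoinRoot.mk_eq_zero]
      by_contra hnd
      obtain ⟨a, b, hab⟩ := (hirr.coprime_iff_not_dvd).2 hnd
      apply hv
      have := congrArg (fun r => Polynomial.aeval f r v) hab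
      simpa [hfχ, ha] using this.symm
    have hsurj := (LinearMap.injective_iff_surjective_of_finrank_eq_finrank hrank).1 hinj
    obtain ⟨β, rfl⟩ := hsurj w
    obtain ⟨k, c, hc⟩ := (H (AdjoinRoot.root χ) (by simp)).2 β (by rintro rfl; simp at hw)
    exact ⟨k, c, by rw [hc, psiMap_pow]⟩
end

section
/- Let q be a prime power, m a positive integer, N = (q^m − 1)/(q − 1), and α ∈ F_{q^m}^* such that the class [α] of α has order N in the quotient group F_{q^m}^*/F_q^* (so that μ := α^N ∈ F_q^*). Then there exist a generator g of the cyclic group F_q^* and a natural number e with gcd(N, e) = 1 such that μ = g^e. -/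
/-- Let `K = F_q ⊆ L = F_{q^m}` be finite fields, `N = (q^m - 1)/(q - 1)`, and let
`α ∈ L^*` be such that its class `[α]` has order `N` in the quotient group `L^* / K^*`
(so that `μ := α^N` lies in `K^*`). Then there exist a generator `g` of the cyclic group
`K^*` and a natural number `e` with `gcd(N, e) = 1` such that `μ = g^e`. -/
theorem statement5 {K L : Type*} [Field K] [Field L] [Fintype K] [Fintype L] [Algebra K L]
    (m : ℕ) (hm : 0 < m) (hcard : Fintype.card L = Fintype.card K ^ m) (α : Lˣ)
    (hord : orderOf (QuotientGroup.mk α :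
        Lˣ ⧸ (Units.map (algebraMap K L).toMonoidHom).range) =
      (Fintype.card K ^ m - 1) / (Fintype.card K - 1)) :
    ∃ (g : Kˣ) (e : ℕ), Subgroup.zpowers g = ⊤ ∧
      Nat.gcd ((Fintype.card K ^ m - 1) / (Fintype.card K - 1)) e = 1 ∧
      Units.map (algebraMap K L).toMonoidHom (g ^ e) =
        α ^ ((Fintype.card K ^ m - 1) / (Fintype.card K - 1)) := by
  classical
  set q := Fintype.card K with hq
  have hq2 : 1 < q := Fintype.one_lt_card
  obtain ⟨N, hN⟩ : (q - 1) ∣ (q ^ m - 1) := by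
    simpa using Nat.sub_dvd_pow_sub_pow q 1 m
  have hdiv : (q ^ m - 1) / (q - 1) = N := by
    rw [hN]; exact Nat.mul_div_cancel_left _ (by omega)
  rw [hdiv] at hord ⊢
  have hqm : 1 < q ^ m := Nat.one_lt_pow hm.ne' hq2
  have hNpos : 0 < N := by
    rcases Nat.eq_zero_or_pos N with h | h
    · subst h; omega
    · exact h
  set f : Kˣ →* Lˣ := Units.map (algebraMap K L).toMonoidHom with hf
  have hinj : Function.Injective f := Units.map_injective (algebraMap K L).injective
  have hcK : Nat.card Kˣ = q - 1 := by rw [Nat.card_units, Nat.card_eq_fintype_card]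
  have hcL : Nat.card Lˣ = (q - 1) * N := by
    rw [Nat.card_units, Nat.card_eq_fintype_card, hcard, hN]
  have hcH : Nat.card f.range = q - 1 := by
    rw [← hcK]; exact (Nat.card_congr (MonoidHom.ofInjective hinj).toEquiv).symm
  have hcQ : Nat.card (Lˣ ⧸ f.range) = N := by
    have h := Subgroup.card_eq_card_quotient_mul_card_subgroup f.range
    rw [hcL, hcH, mul_comm] at h
    exact (Nat.eq_of_mul_eq_mul_right (by omega) h).symm
  obtain ⟨γ, hγ⟩ := IsCyclic.exists_generator (α := Lˣ)
  have hordγ : orderOf γ = (q - 1) * N := by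
    rw [orderOf_eq_card_of_forall_mem_zpowers hγ, hcL]
  obtain ⟨a, ha⟩ := (mem_powers_iff_mem_zpowers.mpr (hγ α))
  have ha : γ ^ a = α := ha
  have hmem : γ ^ N ∈ f.range := by
    rw [← QuotientGroup.eq_one_iff, QuotientGroup.mk_pow, ← hcQ]
    exact pow_card_eq_one'
  obtain ⟨g, hg⟩ := hmem
  refine ⟨g, a, ?_, ?_, ?_⟩
  · apply Subgroup.eq_top_of_card_eq
    rw [Nat.card_zpowers, hcK, ← orderOf_injective f hinj, hg,
      orderOf_pow_of_dvd hNpos.ne' (by rw [hordγ]; exact dvd_mul_left _ _), hordγ]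
    exact Nat.mul_div_cancel _ hNpos
  · have h1 : (QuotientGroup.mk α : Lˣ ⧸ f.range) = (QuotientGroup.mk γ) ^ a := by
      rw [← ha, QuotientGroup.mk_pow]
    have h2 : orderOf (QuotientGroup.mk γ : Lˣ ⧸ f.range) = N := by
      apply Nat.dvd_antisymm
      · have h := orderOf_dvd_natCard (QuotientGroup.mk γ : Lˣ ⧸ f.range)
        rwa [hcQ] at h
      · rw [← hord, h1]; exact orderOf_pow_dvd a
    rw [h1, orderOf_pow, h2] at hord
    have h3 := Nat.div_mul_cancel (Nat.gcd_dvd_left N a)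
    rw [hord] at h3
    exact Nat.eq_of_mul_eq_mul_left hNpos (by rw [h3, mul_one])
  · rw [map_pow, hg, ← ha, ← pow_mul, ← pow_mul, mul_comm]
end

section
/- Let Ψ ∈ PGL_{n+1}(F_q) be transitive on ℙ^n. Then for every point P ∈ U there exists an integer k with 1 ≤ k ≤ n+1 such that Ψ^k(P) ∈ U; that is, the absolute fractional jump index J_Ψ of Ψ is at most n+1. -/
/-- The affine chart `U = {X_n ≠ 0} ⊆ ℙ^n(K)`. -/
def affineChart (K : Type*) [Field K] (n : ℕ) : Set (Projectivization K (Fin (n + 1) → K)) :=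
  {P | P.rep (Fin.last n) ≠ 0}

/-- The hyperplane at infinity `H = {X_n = 0} ⊆ ℙ^n(K)`. -/
def hyperplaneAtInfinity (K : Type*) [Field K] (n : ℕ) :
    Set (Projectivization K (Fin (n + 1) → K)) :=
  {P | P.rep (Fin.last n) = 0}

lemma mk_mem_affineChart {K : Type*} [Field K] {n : ℕ} (v : Fin (n + 1) → K) (hv : v ≠ 0) :
    Projectivization.mk K v hv ∈ affineChart K n ↔ v (Fin.last n) ≠ 0 := by
  obtain ⟨a, ha⟩ := Projectivization.exists_smul_eq_mk_rep K v hv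
  unfold affineChart
  rw [Set.mem_ofPred_eq, ← ha]
  simp [Units.smul_def]

lemma projMap_iterate {K : Type*} [Field K] {n : ℕ} (M : GL (Fin (n + 1)) K) (k : ℕ)
    (v : Fin (n + 1) → K) (hv : v ≠ 0) :
    ∃ h : (M.val ^ k).mulVec v ≠ 0,
      (projMap M)^[k] (Projectivization.mk K v hv) = Projectivization.mk K _ h := by
  induction k with
  | zero => simp [hv]
  | succ k ih =>
    obtain ⟨h, e⟩ := ih
    have e2 : (M.val ^ (k + 1)).mulVec v = M.val.mulVec ((M.val ^ k).mulVec v) := by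
      rw [Matrix.mulVec_mulVec, pow_succ']
    have e3 : (Matrix.GeneralLinearGroup.toLin M).toLinearEquiv ((M.val ^ k).mulVec v)
        = (M.val ^ (k + 1)).mulVec v := by
      rw [e2]; rfl
    refine ⟨?_, ?_⟩
    · rw [← e3]
      exact (LinearEquiv.map_ne_zero_iff _).2 h
    · rw [Function.iterate_succ_apply', e, projMap, Projectivization.map_mk]
      congr 1

/-- If `Ψ = [M] ∈ PGL_{n+1}(F_q)` is transitive on `ℙ^n`, then for every point `P ∈ U` there
exists `k` with `1 ≤ k ≤ n + 1` such that `Ψ^k(P) ∈ U`; that is, the absolute fractional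
jump index of `Ψ` is at most `n + 1`. -/
theorem statement6 {K : Type*} [Field K] [Fintype K] (n : ℕ) (hn : 0 < n)
    (M : GL (Fin (n + 1)) K) (htrans : ProjTransitive M) :
    ∀ P ∈ affineChart K n, ∃ k : ℕ, 1 ≤ k ∧ k ≤ n + 1 ∧
      (projMap M)^[k] P ∈ affineChart K n := by
  intro P hP
  by_contra hcon
  push Not at hcon
  induction P using Projectivization.ind with
  | h v hv =>
  rw [mk_mem_affineChart] at hP
  have hz : ∀ k, 1 ≤ k → k ≤ n + 1 → (M.val ^ k).mulVec v (Fin.last n) = 0 := by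
    intro k h1 h2
    obtain ⟨h, e⟩ := projMap_iterate M k v hv
    have := hcon k h1 h2
    rw [e, mk_mem_affineChart] at this
    simpa using this
  have hCH := Matrix.aeval_self_charpoly M.val
  rw [Polynomial.aeval_eq_sum_range, Matrix.charpoly_natDegree_eq_dim, Fintype.card_fin] at hCH
  have h2 := congrArg (fun B => B.mulVec v (Fin.last n)) hCH
  simp only [Matrix.sum_mulVec, Finset.sum_apply, Matrix.smul_mulVec, Pi.smul_apply,
    Matrix.zero_mulVec, Pi.zero_apply] at h2
  rw [Finset.sum_range_succ', Finset.sum_eq_zero] at h2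
  · have hdet : M.val.det ≠ 0 := (Matrix.isUnits_det_units M).ne_zero
    rw [Matrix.det_eq_sign_charpoly_coeff] at hdet
    have h3 := right_ne_zero_of_mul hdet
    simp only [pow_zero, Matrix.one_mulVec, zero_add, smul_eq_mul, mul_eq_zero] at h2
    exact h2.elim h3 hP
  · intro i hi
    rw [Finset.mem_range] at hi
    rw [hz (i + 1) (by omega) (by omega), smul_zero]
end

section
/- Let Ψ ∈ PGL_{n+1}(F_q) be transitive on ℙ^n. Then the absolute fractional jump index of Ψ equals n+1; that is, every P ∈ U satisfies J_{P,Ψ} ≤ n+1, and there exists a point P ∈ U with Ψ^i(P) ∈ H for all i ∈ {1,…,n} (so that J_{P,Ψ} = n+1). -/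
theorem s7_mk_rep_iff {K : Type*} [Field K] {n : ℕ} (v : Fin (n + 1) → K) (hv : v ≠ 0) :
    (Projectivization.mk K v hv).rep (Fin.last n) = 0 ↔ v (Fin.last n) = 0 := by
  obtain ⟨a, ha⟩ := Projectivization.exists_smul_eq_mk_rep K v hv
  rw [← ha]
  simp [Units.smul_def]

/-- The linear map underlying `projMap M`. -/
noncomputable def s7T {K : Type*} [Field K] {n : ℕ} (M : GL (Fin (n + 1)) K) :
    (Fin (n + 1) → K) →ₗ[K] (Fin (n + 1) → K) :=
  ((Matrix.GeneralLinearGroup.toLin M).toLinearEquiv :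
      (Fin (n + 1) → K) →ₗ[K] (Fin (n + 1) → K))

theorem s7T_inj {K : Type*} [Field K] {n : ℕ} (M : GL (Fin (n + 1)) K) :
    Function.Injective (s7T M) :=
  (Matrix.GeneralLinearGroup.toLin M).toLinearEquiv.injective

theorem s7_pow_ne {K : Type*} [Field K] {n : ℕ} (M : GL (Fin (n + 1)) K)
    (v : Fin (n + 1) → K) (hv : v ≠ 0) (k : ℕ) : (s7T M ^ k) v ≠ 0 := by
  induction k with
  | zero => simpa using hv
  | succ k ih =>
    rw [pow_succ', Module.End.mul_apply]
    exact fun h => ih (s7T_inj M (by rw [h, map_zero]))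

theorem s7_iter {K : Type*} [Field K] {n : ℕ} (M : GL (Fin (n + 1)) K)
    (v : Fin (n + 1) → K) (hv : v ≠ 0) (k : ℕ) :
    (projMap M)^[k] (Projectivization.mk K v hv) =
      Projectivization.mk K ((s7T M ^ k) v) (s7_pow_ne M v hv k) := by
  induction k with
  | zero => simp
  | succ k ih =>
    rw [Function.iterate_succ_apply', ih]
    simp only [pow_succ', Module.End.mul_apply]
    rfl

theorem s7_iter_rep {K : Type*} [Field K] {n : ℕ} (M : GL (Fin (n + 1)) K)
    (v : Fin (n + 1) → K) (hv : v ≠ 0) (k : ℕ) :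
    ((projMap M)^[k] (Projectivization.mk K v hv)).rep (Fin.last n) = 0 ↔
      ((s7T M ^ k) v) (Fin.last n) = 0 := by
  rw [s7_iter, s7_mk_rep_iff]

theorem s7_key {K : Type*} [Field K] {n : ℕ} (M : GL (Fin (n + 1)) K)
    (htrans : ProjTransitive M) (w : Fin (n + 1) → K) (hw : w ≠ 0) :
    ∃ k ≤ n, ((s7T M ^ k) w) (Fin.last n) ≠ 0 := by
  by_contra! hcon
  have hall : ∀ k, ((s7T M ^ k) w) (Fin.last n) = 0 := by
    intro k
    rw [LinearMap.pow_eq_aeval_mod_charpoly]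
    have hdeg : (Polynomial.X ^ k %ₘ (s7T M).charpoly).natDegree < n + 1 := by
      have h1 : (s7T M).charpoly.natDegree = n + 1 := by
        rw [LinearMap.charpoly_natDegree]; simp
      have := Polynomial.natDegree_modByMonic_lt (Polynomial.X ^ k : Polynomial K)
        (LinearMap.charpoly_monic (s7T M)) (by
          intro h; rw [h] at h1; simp at h1)
      omega
    rw [Polynomial.aeval_eq_sum_range' hdeg]
    simp only [LinearMap.sum_apply, LinearMap.smul_apply, Finset.sum_apply, Pi.smul_apply]
    refine Finset.sum_eq_zero fun i hi => ?_
    rw [hcon i (by simpa [Nat.lt_succ_iff] using hi), smul_zero]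
  have he : (Pi.single (Fin.last n) 1 : Fin (n + 1) → K) ≠ 0 := by
    intro h
    have := congrFun h (Fin.last n)
    simp at this
  obtain ⟨k, hk⟩ := htrans (Projectivization.mk K w hw) (Projectivization.mk K _ he)
  have h := (s7_iter_rep M w hw k).2 (hall k)
  rw [hk, s7_mk_rep_iff] at h
  simp at h

/-- If `Ψ = [M] ∈ PGL_{n+1}(F_q)` is transitive on `ℙ^n`, then its absolute fractional jump
index equals `n + 1`: every `P ∈ U` admits `k` with `1 ≤ k ≤ n + 1` and `Ψ^k(P) ∈ U`, and
there exists a point `P ∈ U` with `Ψ^i(P) ∈ H` for all `i ∈ {1, …, n}` (so that its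
fractional jump index is exactly `n + 1`). -/
theorem statement7 {K : Type*} [Field K] [Fintype K] (n : ℕ) (hn : 0 < n)
    (M : GL (Fin (n + 1)) K) (htrans : ProjTransitive M) :
    (∀ P ∈ affineChart K n, ∃ k : ℕ, 1 ≤ k ∧ k ≤ n + 1 ∧
        (projMap M)^[k] P ∈ affineChart K n) ∧
      ∃ P ∈ affineChart K n, ∀ i : ℕ, 1 ≤ i → i ≤ n →
        (projMap M)^[i] P ∈ hyperplaneAtInfinity K n := by
  constructor
  · intro P _
    induction P using Projectivization.ind with
    | h v hv =>
      obtain ⟨k, hk, h⟩ := s7_key M htrans _ (s7_pow_ne M v hv 1)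
      refine ⟨k + 1, by omega, by omega, ?_⟩
      intro h0
      rw [s7_iter_rep, pow_succ, Module.End.mul_apply] at h0
      rw [pow_one] at h
      exact h h0
  · let f : (Fin (n + 1) → K) →ₗ[K] (Fin n → K) :=
      LinearMap.pi fun i => (LinearMap.proj (Fin.last n)) ∘ₗ (s7T M ^ (i.val + 1))
    have hker : LinearMap.ker f ≠ ⊥ := LinearMap.ker_ne_bot_of_finrank_lt (by simp)
    obtain ⟨v, hvk, hv⟩ := Submodule.exists_mem_ne_zero_of_ne_bot hker
    have hz : ∀ i : ℕ, 1 ≤ i → i ≤ n → ((s7T M ^ i) v) (Fin.last n) = 0 := by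
      intro i h1 h2
      have := congrFun (LinearMap.mem_ker.1 hvk) ⟨i - 1, by omega⟩
      simpa [f, Nat.sub_add_cancel h1] using this
    refine ⟨Projectivization.mk K v hv, ?_, fun i h1 h2 => (s7_iter_rep M v hv i).2 (hz i h1 h2)⟩
    intro h0
    rw [s7_mk_rep_iff] at h0
    obtain ⟨k, hk, h⟩ := s7_key M htrans v hv
    rcases Nat.eq_zero_or_pos k with rfl | hpos
    · exact h (by simpa using h0)
    · exact h (hz k hpos hk)
end

section
/- Let Ψ ∈ PGL_{n+1}(F_q) be transitive on ℙ^n. Then there is exactly one point P ∈ ℙ^n such that Ψ^i(P) ∈ H for every i ∈ {1,…,n}, and this unique point P lies in U. -/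
/-- The linear endomorphism attached to `M`. -/
noncomputable def linA {K : Type*} [Field K] {n : ℕ} (M : GL (Fin (n + 1)) K) :
    Module.End K (Fin (n + 1) → K) :=
  ((Matrix.GeneralLinearGroup.toLin M).toLinearEquiv :
      (Fin (n + 1) → K) →ₗ[K] (Fin (n + 1) → K))

theorem linA_inj {K : Type*} [Field K] {n : ℕ} (M : GL (Fin (n + 1)) K) :
    Function.Injective (linA M) :=
  (Matrix.GeneralLinearGroup.toLin M).toLinearEquiv.injective

theorem linA_pow_ne {K : Type*} [Field K] {n : ℕ} (M : GL (Fin (n + 1)) K)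
    (v : Fin (n + 1) → K) (hv : v ≠ 0) (k : ℕ) : (linA M ^ k) v ≠ 0 := by
  induction k with
  | zero => simpa using hv
  | succ k ih =>
    rw [pow_succ', Module.End.mul_apply]
    intro h
    exact ih (linA_inj M (by rw [h, map_zero]))

theorem projMap_iter {K : Type*} [Field K] {n : ℕ} (M : GL (Fin (n + 1)) K)
    (v : Fin (n + 1) → K) (hv : v ≠ 0) (k : ℕ) :
    (projMap M)^[k] (Projectivization.mk K v hv) =
      Projectivization.mk K ((linA M ^ k) v) (linA_pow_ne M v hv k) := by
  induction k with
  | zero => simp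
  | succ k ih =>
    rw [Function.iterate_succ_apply', ih]
    simp only [pow_succ', Module.End.mul_apply]
    exact Projectivization.map_mk _ _ _ _

theorem mk_mem_H {K : Type*} [Field K] {n : ℕ} (v : Fin (n + 1) → K) (hv : v ≠ 0) :
    (Projectivization.mk K v hv) ∈ hyperplaneAtInfinity K n ↔ v (Fin.last n) = 0 := by
  obtain ⟨a, ha⟩ := Projectivization.exists_smul_eq_mk_rep K v hv
  change (Projectivization.mk K v hv).rep (Fin.last n) = 0 ↔ _
  rw [← ha]
  simp [Units.smul_def]

theorem eq_zero_of_all {K : Type*} [Field K] {n : ℕ} (M : GL (Fin (n + 1)) K)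
    (htrans : ProjTransitive M) (v : Fin (n + 1) → K)
    (h : ∀ i < n + 1, (linA M ^ i) v (Fin.last n) = 0) : v = 0 := by
  by_contra hv
  have hall : ∀ k, (linA M ^ k) v (Fin.last n) = 0 := by
    intro k
    rw [LinearMap.pow_eq_aeval_mod_charpoly]
    have hd : (Polynomial.X ^ k %ₘ (linA M).charpoly).natDegree < n + 1 := by
      have h1 : (linA M).charpoly.natDegree = n + 1 := by
        rw [LinearMap.charpoly_natDegree]; simp
      refine lt_of_lt_of_eq ?_ h1
      apply Polynomial.natDegree_modByMonic_lt _ (LinearMap.charpoly_monic _)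
      intro h2
      rw [h2] at h1
      simp at h1
    rw [Polynomial.aeval_eq_sum_range' hd]
    rw [LinearMap.sum_apply, Finset.sum_apply]
    apply Finset.sum_eq_zero
    intro i hi
    rw [LinearMap.smul_apply, Pi.smul_apply, h i (Finset.mem_range.1 hi), smul_zero]
  have he : (Pi.single (Fin.last n) 1 : Fin (n + 1) → K) ≠ 0 := by
    intro h0
    simpa using congrFun h0 (Fin.last n)
  obtain ⟨k, hk⟩ := htrans (Projectivization.mk K v hv) (Projectivization.mk K _ he)
  rw [projMap_iter] at hk
  have := (mk_mem_H _ (linA_pow_ne M v hv k)).2 (hall k)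
  rw [hk, mk_mem_H] at this
  simp at this

/-- The map recording the last coordinates of the first `n + 1` iterates. -/
noncomputable def recL {K : Type*} [Field K] {n : ℕ} (M : GL (Fin (n + 1)) K) :
    (Fin (n + 1) → K) →ₗ[K] (Fin (n + 1) → K) :=
  LinearMap.pi fun i => (LinearMap.proj (Fin.last n)).comp (linA M ^ (i : ℕ))

theorem recL_apply {K : Type*} [Field K] {n : ℕ} (M : GL (Fin (n + 1)) K)
    (v : Fin (n + 1) → K) (i : Fin (n + 1)) :
    recL M v i = (linA M ^ (i : ℕ)) v (Fin.last n) := rfl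

theorem recL_inj {K : Type*} [Field K] {n : ℕ} (M : GL (Fin (n + 1)) K)
    (htrans : ProjTransitive M) : Function.Injective (recL M) := by
  rw [injective_iff_map_eq_zero]
  intro v hv
  exact eq_zero_of_all M htrans v fun i hi => congrFun hv ⟨i, hi⟩

theorem cond_iff {K : Type*} [Field K] {n : ℕ} (M : GL (Fin (n + 1)) K)
    (v : Fin (n + 1) → K) (hv : v ≠ 0) :
    (∀ i : ℕ, 1 ≤ i → i ≤ n →
      (projMap M)^[i] (Projectivization.mk K v hv) ∈ hyperplaneAtInfinity K n) ↔
    recL M v = (v (Fin.last n)) • (Pi.single 0 1 : Fin (n + 1) → K) := by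
  simp only [projMap_iter, mk_mem_H]
  constructor
  · intro h
    ext i
    rw [recL_apply]
    by_cases hi : i = 0
    · subst hi; simp
    · have : (i : ℕ) ≠ 0 := fun h0 => hi (Fin.ext h0)
      rw [h i (by omega) (by omega)]
      simp [hi]
  · intro h i h1 h2
    have := congrFun h ⟨i, by omega⟩
    rw [recL_apply] at this
    rw [this]
    have : (⟨i, by omega⟩ : Fin (n + 1)) ≠ 0 := by
      intro h0
      have := congrArg Fin.val h0
      simp at this
      omega
    simp [this]

/-- If `Ψ = [M] ∈ PGL_{n+1}(F_q)` is transitive on `ℙ^n`, then there is exactly one point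
`P ∈ ℙ^n` with `Ψ^i(P) ∈ H` for all `i ∈ {1, …, n}`, and this unique point lies in `U`. -/
theorem statement8 {K : Type*} [Field K] [Fintype K] (n : ℕ) (hn : 0 < n)
    (M : GL (Fin (n + 1)) K) (htrans : ProjTransitive M) :
    (∃! P : Projectivization K (Fin (n + 1) → K),
        ∀ i : ℕ, 1 ≤ i → i ≤ n → (projMap M)^[i] P ∈ hyperplaneAtInfinity K n) ∧
      ∀ P : Projectivization K (Fin (n + 1) → K),
        (∀ i : ℕ, 1 ≤ i → i ≤ n → (projMap M)^[i] P ∈ hyperplaneAtInfinity K n) →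
          P ∈ affineChart K n := by
  have hinj := recL_inj M htrans
  have hlast : ∀ v : Fin (n + 1) → K, v ≠ 0 →
      recL M v = (v (Fin.last n)) • (Pi.single 0 1 : Fin (n + 1) → K) →
      v (Fin.last n) ≠ 0 := by
    intro v hv h h0
    rw [h0, zero_smul] at h
    exact hv (hinj (by rw [h, map_zero]))
  refine ⟨?_, ?_⟩
  · obtain ⟨v, hv⟩ := (LinearMap.injective_iff_surjective.1 hinj) (Pi.single 0 1)
    have hv1 : v (Fin.last n) = 1 := by
      have := congrFun hv 0
      rw [recL_apply] at this
      simpa using this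
    have hv0 : v ≠ 0 := by
      rintro rfl
      simp at hv1
    refine ⟨Projectivization.mk K v hv0, ?_, ?_⟩
    · change ∀ i : ℕ, _
      rw [cond_iff, hv1, one_smul, hv]
    · intro Q
      induction Q using Projectivization.ind with
      | h w hw =>
        intro h
        replace h := (cond_iff M w hw).1 h
        rw [Projectivization.mk_eq_mk_iff']
        refine ⟨w (Fin.last n), hinj ?_⟩
        rw [h, map_smul, hv]
  · intro P
    induction P using Projectivization.ind with
    | h w hw =>
      intro h
      have h3 := hlast w hw ((cond_iff M w hw).1 h)
      intro h4
      exact h3 ((mk_mem_H w hw).1 h4)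
end

section
/- Let Ψ ∈ PGL_{n+1}(F_q) act transitively on ℙ^n, and let ψ be its fractional jump. Then ψ acts transitively on A^n = F_q^n, i.e., for all u, v ∈ F_q^n there exists k ≥ 0 with ψ^k(u) = v. -/
/-- The embedding `π : A^n → U ⊆ ℙ^n(K)`, `(x_1, …, x_n) ↦ [x_1 : ⋯ : x_n : 1]`. -/
def toProj {K : Type*} [Field K] {n : ℕ} (x : Fin n → K) :
    Projectivization K (Fin (n + 1) → K) :=
  Projectivization.mk K (Fin.snoc x 1) (fun h => by
    have h1 := congrFun h (Fin.last n)
    simp at h1)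

/-- The inverse `π⁻¹ : U → A^n` of the affine embedding (junk values off `U`). -/
noncomputable def fromProj {K : Type*} [Field K] {n : ℕ}
    (P : Projectivization K (Fin (n + 1) → K)) : Fin n → K :=
  fun i => P.rep (Fin.castSucc i) / P.rep (Fin.last n)

/-- The fractional jump index `J_{π(x),Ψ} = min {k ≥ 1 : Ψ^k(π(x)) ∈ U}`. -/
noncomputable def jumpIndex {K : Type*} [Field K] {n : ℕ} (M : GL (Fin (n + 1)) K)
    (x : Fin n → K) : ℕ :=
  sInf {k : ℕ | 1 ≤ k ∧ (projMap M)^[k] (toProj x) ∈ affineChart K n}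

/-- The fractional jump `ψ(x) = π⁻¹(Ψ^{J_{π(x),Ψ}}(π(x)))` of the projective automorphism
induced by `M`. -/
noncomputable def fracJump {K : Type*} [Field K] {n : ℕ} (M : GL (Fin (n + 1)) K)
    (x : Fin n → K) : Fin n → K :=
  fromProj ((projMap M)^[jumpIndex M x] (toProj x))

theorem toProj_rep_aux {K : Type*} [Field K] {n : ℕ} (x : Fin n → K) :
    ∃ a : K, a ≠ 0 ∧ (toProj x).rep = a • (Fin.snoc x 1 : Fin (n + 1) → K) := by
  obtain ⟨a, ha⟩ := Projectivization.exists_smul_eq_mk_rep K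
    (Fin.snoc x 1 : Fin (n + 1) → K) (fun h => by
      have h1 := congrFun h (Fin.last n)
      simp at h1)
  exact ⟨a, a.ne_zero, ha.symm⟩

theorem toProj_mem_aux {K : Type*} [Field K] {n : ℕ} (x : Fin n → K) :
    toProj x ∈ affineChart K n := by
  obtain ⟨a, ha, h⟩ := toProj_rep_aux x
  simp [affineChart, h, ha]

theorem fromProj_toProj_aux {K : Type*} [Field K] {n : ℕ} (x : Fin n → K) :
    fromProj (toProj x) = x := by
  obtain ⟨a, ha, h⟩ := toProj_rep_aux x
  funext i
  simp [fromProj, h, ha]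

theorem toProj_fromProj_aux {K : Type*} [Field K] {n : ℕ}
    (P : Projectivization K (Fin (n + 1) → K)) (hP : P ∈ affineChart K n) :
    toProj (fromProj P) = P := by
  have hP' : P.rep (Fin.last n) ≠ 0 := hP
  conv_rhs => rw [← P.mk_rep]
  unfold toProj
  rw [Projectivization.mk_eq_mk_iff']
  refine ⟨(P.rep (Fin.last n))⁻¹, ?_⟩
  funext i
  refine Fin.lastCases ?_ (fun j => ?_) i
  · simp [hP']
  · simp [fromProj, div_eq_inv_mul]

theorem fracJump_reach_aux {K : Type*} [Field K] {n : ℕ} (M : GL (Fin (n + 1)) K)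
    (v : Fin n → K) (m : ℕ) : ∀ u : Fin n → K, (projMap M)^[m] (toProj u) = toProj v →
      ∃ k : ℕ, (fracJump M)^[k] u = v := by
  induction m using Nat.strong_induction_on with
  | _ m ih =>
    intro u h
    rcases Nat.eq_zero_or_pos m with rfl | hm
    · refine ⟨0, ?_⟩
      have h' : toProj u = toProj v := h
      have h2 := congrArg fromProj h'
      rwa [fromProj_toProj_aux, fromProj_toProj_aux] at h2
    · have hmem : m ∈ {k : ℕ | 1 ≤ k ∧ (projMap M)^[k] (toProj u) ∈ affineChart K n} :=
        ⟨hm, by rw [h]; exact toProj_mem_aux v⟩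
      have hle : jumpIndex M u ≤ m := Nat.sInf_le hmem
      obtain ⟨h1, h2⟩ : 1 ≤ jumpIndex M u ∧
          (projMap M)^[jumpIndex M u] (toProj u) ∈ affineChart K n := Nat.sInf_mem ⟨m, hmem⟩
      obtain ⟨k, hk⟩ := ih (m - jumpIndex M u) (by omega) (fracJump M u) (by
        unfold fracJump
        rw [toProj_fromProj_aux _ h2, ← Function.iterate_add_apply, Nat.sub_add_cancel hle, h])
      exact ⟨k + 1, by rw [Function.iterate_succ_apply, hk]⟩

/-- If `Ψ = [M] ∈ PGL_{n+1}(F_q)` acts transitively on `ℙ^n`, then its fractional jump `ψ`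
acts transitively on `A^n = F_q^n`. -/
theorem statement9 {K : Type*} [Field K] [Fintype K] (n : ℕ) (hn : 0 < n)
    (M : GL (Fin (n + 1)) K) (htrans : ProjTransitive M) :
    ∀ u v : Fin n → K, ∃ k : ℕ, (fracJump M)^[k] u = v := by
  intro u v
  obtain ⟨m, hm⟩ := htrans (toProj u) (toProj v)
  exact fracJump_reach_aux M v m u hm
end

section
/- Let Ψ = [M] ∈ PGL_{n+1}(F_q) be transitive on ℙ^n, let x = (x_1,…,x_n) ∈ F_q^n, and let j be the smallest integer i ≥ 1 such that the last coordinate of the column vector M^i · (x_1,…,x_n,1)^T is nonzero. Then j equals the fractional jump index J_{π(x),Ψ}, and writing M^j · (x_1,…,x_n,1)^T = (y_1,…,y_n,b)^T with b ≠ 0, the fractional jump satisfies ψ(x) = (y_1/b, …, y_n/b). In particular, ψ is given piecewise by n-tuples of degree-1 rational functions with a common degree-1 denominator. -/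
theorem aux_iter {K : Type*} [Field K] {n : ℕ} (M : GL (Fin (n + 1)) K) (x : Fin n → K) (k : ℕ) :
    ∃ c : K, c ≠ 0 ∧ ((projMap M)^[k] (toProj x)).rep =
      c • ((M : Matrix (Fin (n + 1)) (Fin (n + 1)) K) ^ k).mulVec (Fin.snoc x 1) := by
  have key : ∀ k : ℕ, ∃ h : ((M : Matrix (Fin (n + 1)) (Fin (n + 1)) K) ^ k).mulVec
      (Fin.snoc x 1 : Fin (n + 1) → K) ≠ 0, (projMap M)^[k] (toProj x) =
      Projectivization.mk K _ h := by
    intro k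
    induction k with
    | zero =>
      have h0 : (Fin.snoc x 1 : Fin (n + 1) → K) ≠ 0 := fun h => by
        have h1 := congrFun h (Fin.last n)
        simp at h1
      refine ⟨by simpa using h0, ?_⟩
      simp [toProj]
    | succ k ih =>
      obtain ⟨h, e⟩ := ih
      have e2 : (Matrix.GeneralLinearGroup.toLin M).toLinearEquiv
          (((M : Matrix (Fin (n + 1)) (Fin (n + 1)) K) ^ k).mulVec (Fin.snoc x 1)) =
          ((M : Matrix (Fin (n + 1)) (Fin (n + 1)) K) ^ (k + 1)).mulVec (Fin.snoc x 1) := by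
        rw [pow_succ', ← Matrix.mulVec_mulVec]
        rfl
      have h' : ((M : Matrix (Fin (n + 1)) (Fin (n + 1)) K) ^ (k + 1)).mulVec
          (Fin.snoc x 1 : Fin (n + 1) → K) ≠ 0 := by
        rw [← e2]
        exact (LinearEquiv.map_ne_zero_iff _).2 h
      refine ⟨h', ?_⟩
      rw [Function.iterate_succ_apply', e, projMap, Projectivization.map_mk]
      congr 1
  obtain ⟨h, e⟩ := key k
  obtain ⟨a, ha⟩ := Projectivization.exists_smul_eq_mk_rep K _ h
  exact ⟨a, a.ne_zero, by rw [e, ← ha]; rfl⟩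

/-- Let `Ψ = [M] ∈ PGL_{n+1}(F_q)` be transitive on `ℙ^n`, let `x ∈ F_q^n`, and let `j` be
the smallest integer `i ≥ 1` such that the last coordinate of `M^i ⬝ (x, 1)ᵀ` is nonzero.
Then `j` equals the fractional jump index of `Ψ` at `π(x)`, and writing
`M^j ⬝ (x, 1)ᵀ = (y_1, …, y_n, b)ᵀ` with `b ≠ 0`, the fractional jump satisfies
`ψ(x) = (y_1/b, …, y_n/b)`. -/
theorem statement11 {K : Type*} [Field K] [Fintype K] (n : ℕ) (hn : 0 < n)
    (M : GL (Fin (n + 1)) K) (htrans : ProjTransitive M) (x : Fin n → K) (j : ℕ)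
    (hj1 : 1 ≤ j)
    (hj2 : ((M : Matrix (Fin (n + 1)) (Fin (n + 1)) K) ^ j).mulVec (Fin.snoc x 1)
        (Fin.last n) ≠ 0)
    (hjmin : ∀ i : ℕ, 1 ≤ i → i < j →
      ((M : Matrix (Fin (n + 1)) (Fin (n + 1)) K) ^ i).mulVec (Fin.snoc x 1)
        (Fin.last n) = 0) :
    j = jumpIndex M x ∧
      ∀ i : Fin n, fracJump M x i =
        ((M : Matrix (Fin (n + 1)) (Fin (n + 1)) K) ^ j).mulVec (Fin.snoc x 1)
            (Fin.castSucc i) /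
          ((M : Matrix (Fin (n + 1)) (Fin (n + 1)) K) ^ j).mulVec (Fin.snoc x 1)
            (Fin.last n) := by
  have hmem : ∀ k, (projMap M)^[k] (toProj x) ∈ affineChart K n ↔
      ((M : Matrix (Fin (n + 1)) (Fin (n + 1)) K) ^ k).mulVec (Fin.snoc x 1)
        (Fin.last n) ≠ 0 := by
    intro k
    obtain ⟨c, hc, e⟩ := aux_iter M x k
    simp [affineChart, e, hc]
  have hj : j = jumpIndex M x := by
    unfold jumpIndex
    apply le_antisymm
    · refine le_csInf ⟨j, hj1, (hmem j).2 hj2⟩ ?_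
      rintro k ⟨hk1, hk2⟩
      by_contra hlt
      exact (hmem k).1 hk2 (hjmin k hk1 (not_le.1 hlt))
    · exact Nat.sInf_le ⟨hj1, (hmem j).2 hj2⟩
  refine ⟨hj, fun i => ?_⟩
  obtain ⟨c, hc, e⟩ := aux_iter M x j
  simp only [fracJump, ← hj, fromProj, e, Pi.smul_apply, smul_eq_mul]
  exact mul_div_mul_left _ _ hc
end

section
/- Let ℓ and n be positive integers and p_1, …, p_ℓ distinct primes. For each i ∈ {1,…,ℓ}, let ψ_i : F_{p_i}^n → F_{p_i}^n be a transitive map (for instance, the fractional jump of a transitive projective automorphism of ℙ^n(F_{p_i})). Let N = p_1⋯p_ℓ and R = Z/NZ. Then there exists a transitive map ψ : R^n → R^n such that for every i ∈ {1,…,ℓ}, the reduction of ψ modulo p_i is ψ_i; that is, π_i ∘ ψ = ψ_i ∘ π_i, where π_i : R^n → F_{p_i}^n is coordinatewise reduction modulo p_i. -/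
lemma minPeriod_of_transitive {S : Type*} [Fintype S] (f : S → S)
    (h : ∀ u v : S, ∃ k : ℕ, f^[k] u = v) (u : S) :
    Function.minimalPeriod f u = Fintype.card S := by
  have hper : 0 < Function.minimalPeriod f u := by
    obtain ⟨k, hk⟩ := h (f u) u
    refine Function.IsPeriodicPt.minimalPeriod_pos (n := k + 1) (Nat.succ_pos k) ?_
    simpa [Function.IsPeriodicPt, Function.IsFixedPt] using hk
  have hb : Function.Bijective
      (fun k : Fin (Function.minimalPeriod f u) => f^[(k : ℕ)] u) := by
    constructor
    · intro a b hab
      exact Fin.ext (Function.iterate_injOn_Iio_minimalPeriod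
        (Set.mem_Iio.2 a.2) (Set.mem_Iio.2 b.2) hab)
    · intro v
      obtain ⟨k, hk⟩ := h u v
      refine ⟨⟨k % Function.minimalPeriod f u, Nat.mod_lt _ hper⟩, ?_⟩
      simpa [Function.iterate_mod_minimalPeriod_eq] using hk
  simpa using Fintype.card_of_bijective hb

/-- Compound generator: given distinct primes `p_1, …, p_ℓ` and, for each `i`, a transitive
map `ψ_i : F_{p_i}^n → F_{p_i}^n` (for instance a fractional jump of a transitive projective
automorphism), there exists a transitive map `Ψ` on `(Z/NZ)^n`, where `N = p_1 ⋯ p_ℓ`,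
whose coordinatewise reduction modulo `p_i` is `ψ_i` for every `i`. -/
theorem statement14 (ℓ n : ℕ) (hℓ : 0 < ℓ) (hn : 0 < n) (p : Fin ℓ → ℕ)
    (hp : ∀ i, (p i).Prime) (hdist : Function.Injective p)
    (ψ : ∀ i : Fin ℓ, (Fin n → ZMod (p i)) → (Fin n → ZMod (p i)))
    (htrans : ∀ i, ∀ u v : Fin n → ZMod (p i), ∃ k : ℕ, (ψ i)^[k] u = v) :
    ∃ Ψ : (Fin n → ZMod (∏ i, p i)) → (Fin n → ZMod (∏ i, p i)),
      (∀ u v : Fin n → ZMod (∏ i, p i), ∃ k : ℕ, Ψ^[k] u = v) ∧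
      ∀ (i : Fin ℓ) (x : Fin n → ZMod (∏ i, p i)),
        (fun j => ZMod.castHom (Finset.dvd_prod_of_mem p (Finset.mem_univ i))
            (ZMod (p i)) (Ψ x j)) =
          ψ i (fun j => ZMod.castHom (Finset.dvd_prod_of_mem p (Finset.mem_univ i))
            (ZMod (p i)) (x j)) := by
  classical
  have hco : Pairwise (Function.onFun Nat.Coprime p) := fun i j hij =>
    (Nat.coprime_primes (hp i) (hp j)).2 (fun h => hij (hdist h))
  let e := ZMod.prodEquivPi p hco
  have he : ∀ i (a : ZMod (∏ i, p i)),
      ZMod.castHom (Finset.dvd_prod_of_mem p (Finset.mem_univ i)) (ZMod (p i)) a = e a i := by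
    intro i a
    have : ZMod.castHom (Finset.dvd_prod_of_mem p (Finset.mem_univ i)) (ZMod (p i)) =
      (Pi.evalRingHom (fun i => ZMod (p i)) i).comp e.toRingHom := Subsingleton.elim _ _
    rw [this]
    rfl
  let Ψ : (Fin n → ZMod (∏ i, p i)) → (Fin n → ZMod (∏ i, p i)) :=
    fun x j => e.symm (fun i => ψ i (fun j => e (x j) i) j)
  have hΨ : ∀ i x, (fun j => e (Ψ x j) i) = ψ i (fun j => e (x j) i) := by
    intro i x
    funext j
    simp [Ψ]
  have hit : ∀ i (k : ℕ) x, (fun j => e (Ψ^[k] x j) i) = (ψ i)^[k] (fun j => e (x j) i) := by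
    intro i k
    induction k with
    | zero => intro x; rfl
    | succ k ih =>
      intro x
      rw [Function.iterate_succ_apply, Function.iterate_succ_apply, ih, hΨ]
  refine ⟨Ψ, ?_, ?_⟩
  · intro u v
    choose k hk using fun i => htrans i (fun j => e (u j) i) (fun j => e (v j) i)
    have hco' : Set.Pairwise (↑(Finset.univ : Finset (Fin ℓ)))
        (Function.onFun Nat.Coprime (fun i => p i ^ n)) := by
      intro i _ j _ hij
      exact Nat.Coprime.pow _ _ (hco hij)
    obtain ⟨K, hK⟩ := Nat.chineseRemainderOfFinset k (fun i => p i ^ n) Finset.univ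
      (fun i _ => pow_ne_zero _ (hp i).ne_zero) hco'
    refine ⟨K, ?_⟩
    have key : ∀ i, (fun j => e (Ψ^[K] u j) i) = (fun j => e (v j) i) := by
      intro i
      haveI : NeZero (p i) := ⟨(hp i).ne_zero⟩
      have hm := minPeriod_of_transitive (ψ i) (htrans i) (fun j => e (u j) i)
      have hc : Fintype.card (Fin n → ZMod (p i)) = p i ^ n := by
        simp [ZMod.card]
      rw [hit, ← hk i, ← Function.iterate_mod_minimalPeriod_eq (n := K),
        ← Function.iterate_mod_minimalPeriod_eq (n := k i), hm, hc]
      have := hK i (Finset.mem_univ i)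
      rw [Nat.ModEq] at this
      rw [this]
    funext j
    apply e.injective
    funext i
    exact congrFun (key i) j
  · intro i x
    simp only [he]
    exact hΨ i x
end
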